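/- Fix a finite-horizon MDP with finite nonempty state space S, finite nonempty action space A, horizon T ≥ 1, initial distribution p₁, a full-support policy π, two strictly positive dynamics functions p and p̃, and a strictly positive reward r : S×A → ℝ. Then the log-return of π under the dynamics p̃ satisfies the Jensen lower bound log E_{p̃^π}[Σ_{t=1}^T r(s_t,a_t)] ≥ E_{p^π}[Σ_{t=1}^T ((1/T)·log r(s_t,a_t) + log p̃(s_{t+1}|s_t,a_t) − log p(s_{t+1}|s_t,a_t))] + log T. (Step 1 of the proof of Theorem 2, Eq. 18: converting variation in dynamics into variation in reward via importance weights and two applications of Jensen's inequality.) -/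

import Mathlib

/-!
Write `w τ = ∏ₜ p̃ / p` for the importance weight of a trajectory, so that
`E_{p̃^π}[R] = E_{p^π}[w * R]` with `R = Σₜ r` (`trajProb_mul_weight`). Since `p^π` is a probability
distribution (`sum_trajProb`), Jensen's inequality for the concave function `log` gives
`log E_{p^π}[w * R] ≥ E_{p^π}[log w + log R]`. A second application of Jensen, to the uniform
average over the `T` time steps, gives `log R ≥ (1/T) Σₜ log r + log T` (`mean_log_add_log_le`).
-/

open Finset Real

/-- Probability of a trajectory `(states, actions)` in a finite-horizon MDP with horizon `T`,
initial distribution `p1`, dynamics `p` and policy `pol`. -/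
noncomputable def trajProb {S A : Type*} [Fintype S] [Fintype A] (T : ℕ)
    (p1 : S → ℝ) (p : S → A → S → ℝ) (pol : S → A → ℝ)
    (τ : (Fin (T + 1) → S) × (Fin T → A)) : ℝ :=
  p1 (τ.1 0) * ∏ t : Fin T,
    pol (τ.1 t.castSucc) (τ.2 t) * p (τ.1 t.castSucc) (τ.2 t) (τ.1 t.succ)

/-- Expectation of a trajectory functional under the trajectory distribution `p^π`. -/
noncomputable def Exp {S A : Type*} [Fintype S] [Fintype A] (T : ℕ)
    (p1 : S → ℝ) (p : S → A → S → ℝ) (pol : S → A → ℝ)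
    (f : ((Fin (T + 1) → S) × (Fin T → A)) → ℝ) : ℝ :=
  ∑ τ : (Fin (T + 1) → S) × (Fin T → A), trajProb T p1 p pol τ * f τ

/-- MaxEnt RL objective (entropy coefficient 1):
`J_MaxEnt(π; p, r) = E_{p^π}[Σ_t (r(s_t,a_t) − log π(a_t|s_t))]`. -/
noncomputable def JMaxEnt {S A : Type*} [Fintype S] [Fintype A] (T : ℕ)
    (p1 : S → ℝ) (p : S → A → S → ℝ) (pol : S → A → ℝ) (r : S → A → ℝ) : ℝ :=
  Exp T p1 p pol (fun τ => ∑ t : Fin T,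
    (r (τ.1 t.castSucc) (τ.2 t) - Real.log (pol (τ.1 t.castSucc) (τ.2 t))))

/-- Total mass of the trajectory weights. The initial weight `p1` is arbitrary so that the induction
on the horizon can restart from the second state, with `p s a` as initial distribution. -/
lemma sum_trajProb {S A : Type*} [Fintype S] [Fintype A]
    (p : S → A → S → ℝ) (hpsum : ∀ s a, ∑ s' : S, p s a s' = 1)
    (pol : S → A → ℝ) (hpolsum : ∀ s, ∑ a : A, pol s a = 1) (T : ℕ) (p1 : S → ℝ) :
    ∑ τ : (Fin (T + 1) → S) × (Fin T → A), trajProb T p1 p pol τ = ∑ s, p1 s := by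
  induction T generalizing p1 with
  | zero =>
    rw [Fintype.sum_prod_type]
    simp only [trajProb, Finset.univ_eq_empty, Finset.prod_empty, mul_one]
    simp only [Finset.sum_const, Finset.card_univ, Fintype.card_unique, one_smul]
    exact Fintype.sum_equiv (Equiv.funUnique (Fin 1) S) _ _ (fun _ => rfl)
  | succ T ih =>
    -- Split off the first state and the first action.
    let e : (S × A) × ((Fin (T + 1) → S) × (Fin T → A)) ≃
        (Fin (T + 2) → S) × (Fin (T + 1) → A) :=
      (Equiv.prodProdProdComm _ _ _ _).trans
        ((Fin.consEquiv (fun _ => S)).prodCongr (Fin.consEquiv (fun _ => A)))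
    have key : ∀ x : (S × A) × ((Fin (T + 1) → S) × (Fin T → A)),
        trajProb (T + 1) p1 p pol (e x)
          = p1 x.1.1 * pol x.1.1 x.1.2 * trajProb T (p x.1.1 x.1.2) p pol x.2 := by
      rintro ⟨⟨s, a⟩, σ, α⟩
      have he : e ((s, a), (σ, α)) = (Fin.cons s σ, Fin.cons a α) := rfl
      rw [he]
      simp only [trajProb, Fin.prod_univ_succ, Fin.cons_zero, Fin.cons_succ, Fin.castSucc_zero,
        ← Fin.succ_castSucc]
      ring
    rw [← Equiv.sum_comp e, Fintype.sum_prod_type]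
    simp only [key, ← Finset.mul_sum, ih, hpsum, mul_one]
    rw [Fintype.sum_prod_type]
    simp only [← Finset.mul_sum, hpolsum, mul_one]

lemma trajProb_nonneg {S A : Type*} [Fintype S] [Fintype A] (T : ℕ)
    (p1 : S → ℝ) (hp1 : ∀ s, 0 ≤ p1 s) (p : S → A → S → ℝ) (hp : ∀ s a s', 0 < p s a s')
    (pol : S → A → ℝ) (hpol : ∀ s a, 0 < pol s a) (τ : (Fin (T + 1) → S) × (Fin T → A)) :
    0 ≤ trajProb T p1 p pol τ :=
  mul_nonneg (hp1 _) (Finset.prod_nonneg fun _ _ => (mul_pos (hpol _ _) (hp _ _ _)).le)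

/-- Change of measure from `p^π` to `p̃^π`: the policy and initial-state factors cancel. -/
lemma trajProb_mul_weight {S A : Type*} [Fintype S] [Fintype A] (T : ℕ)
    (p1 : S → ℝ) (p : S → A → S → ℝ) (hp : ∀ s a s', 0 < p s a s')
    (pt : S → A → S → ℝ) (pol : S → A → ℝ) (τ : (Fin (T + 1) → S) × (Fin T → A)) :
    trajProb T p1 p pol τ * ∏ t : Fin T,
        (pt (τ.1 t.castSucc) (τ.2 t) (τ.1 t.succ) / p (τ.1 t.castSucc) (τ.2 t) (τ.1 t.succ))
      = trajProb T p1 pt pol τ := by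
  unfold trajProb
  rw [mul_assoc, ← Finset.prod_mul_distrib]
  congr 1
  refine Finset.prod_congr rfl fun t _ => ?_
  have := (hp (τ.1 t.castSucc) (τ.2 t) (τ.1 t.succ)).ne'
  field_simp

/-- Jensen's inequality for `log` and the uniform average of `T` positive numbers. -/
lemma mean_log_add_log_le (T : ℕ) (hT : 1 ≤ T) (x : Fin T → ℝ) (hx : ∀ t, 0 < x t) :
    ∑ t, (1 : ℝ) / T * Real.log (x t) + Real.log T ≤ Real.log (∑ t, x t) := by
  have hT0 : (0 : ℝ) < T := by exact_mod_cast hT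
  have : Nonempty (Fin T) := ⟨⟨0, hT⟩⟩
  have hsum : 0 < ∑ t, x t := Finset.sum_pos (fun t _ => hx t) Finset.univ_nonempty
  have h := strictConcaveOn_log_Ioi.concaveOn.le_map_sum (t := Finset.univ)
    (w := fun _ : Fin T => (1 : ℝ) / T) (p := x) (fun _ _ => by positivity)
    (by simp [hT0.ne']) (fun t _ => hx t)
  simp only [smul_eq_mul] at h
  rw [← Finset.mul_sum (f := x), Real.log_mul (by positivity) hsum.ne', one_div, Real.log_inv] at h
  rw [one_div]
  linarith

/-- **Step 1 of the proof of Theorem 2 (Eq. 18).** Converting variation in dynamics into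
variation in reward: `log E_{p̃^π}[Σ_t r(s_t,a_t)]
  ≥ E_{p^π}[Σ_t ((1/T)·log r(s_t,a_t) + log p̃(s_{t+1}|s_t,a_t) − log p(s_{t+1}|s_t,a_t))] + log T`. -/
theorem log_return_jensen_lower_bound
    {S A : Type*} [Fintype S] [Fintype A] [Nonempty S] [Nonempty A]
    (T : ℕ) (hT : 1 ≤ T)
    (p1 : S → ℝ) (hp1 : ∀ s, 0 ≤ p1 s) (hp1sum : ∑ s : S, p1 s = 1)
    (p : S → A → S → ℝ) (hp : ∀ s a s', 0 < p s a s')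
    (hpsum : ∀ s a, ∑ s' : S, p s a s' = 1)
    (pt : S → A → S → ℝ) (hpt : ∀ s a s', 0 < pt s a s')
    (hptsum : ∀ s a, ∑ s' : S, pt s a s' = 1)
    (pol : S → A → ℝ) (hpol : ∀ s a, 0 < pol s a)
    (hpolsum : ∀ s, ∑ a : A, pol s a = 1)
    (r : S → A → ℝ) (hr : ∀ s a, 0 < r s a) :
    Real.log (Exp T p1 pt pol (fun τ => ∑ t : Fin T, r (τ.1 t.castSucc) (τ.2 t)))
      ≥ Exp T p1 p pol (fun τ => ∑ t : Fin T,
          (((1 : ℝ) / T) * Real.log (r (τ.1 t.castSucc) (τ.2 t))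
            + Real.log (pt (τ.1 t.castSucc) (τ.2 t) (τ.1 t.succ))
            - Real.log (p (τ.1 t.castSucc) (τ.2 t) (τ.1 t.succ))))
        + Real.log (T : ℝ) := by
  have hpr := trajProb_nonneg T p1 hp1 p hp pol hpol
  have htot : ∑ τ, trajProb T p1 p pol τ = 1 :=
    (sum_trajProb p hpsum pol hpolsum T p1).trans hp1sum
  have : Nonempty (Fin T) := ⟨⟨0, hT⟩⟩
  have hR : ∀ τ : (Fin (T + 1) → S) × (Fin T → A),
      0 < ∑ t : Fin T, r (τ.1 t.castSucc) (τ.2 t) :=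
    fun τ => Finset.sum_pos (fun t _ => hr _ _) Finset.univ_nonempty
  have hw : ∀ τ : (Fin (T + 1) → S) × (Fin T → A),
      0 < ∏ t : Fin T,
        (pt (τ.1 t.castSucc) (τ.2 t) (τ.1 t.succ) / p (τ.1 t.castSucc) (τ.2 t) (τ.1 t.succ)) :=
    fun τ => Finset.prod_pos fun t _ => div_pos (hpt _ _ _) (hp _ _ _)
  have jensen := strictConcaveOn_log_Ioi.concaveOn.le_map_sum (t := Finset.univ)
    (w := trajProb T p1 p pol)
    (p := fun τ => (∏ t : Fin T,
        (pt (τ.1 t.castSucc) (τ.2 t) (τ.1 t.succ) / p (τ.1 t.castSucc) (τ.2 t) (τ.1 t.succ)))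
      * ∑ t : Fin T, r (τ.1 t.castSucc) (τ.2 t))
    (fun τ _ => hpr τ) htot (fun τ _ => mul_pos (hw τ) (hR τ))
  simp only [smul_eq_mul, ← mul_assoc, trajProb_mul_weight T p1 p hp pt pol] at jensen
  refine ge_iff_le.mpr (le_trans ?_ jensen)
  -- Absorb the constant `log T` into the expectation, using that the total mass is one.
  have hlogT : Real.log (T : ℝ) = ∑ τ, trajProb T p1 p pol τ * Real.log (T : ℝ) := by
    rw [← Finset.sum_mul, htot, one_mul]
  rw [hlogT, Exp, ← Finset.sum_add_distrib]
  refine Finset.sum_le_sum fun τ _ => ?_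
  rw [← mul_add]
  refine mul_le_mul_of_nonneg_left ?_ (hpr τ)
  rw [Real.log_mul (hw τ).ne' (hR τ).ne',
    Real.log_prod fun t _ => (div_pos (hpt _ _ _) (hp _ _ _)).ne']
  have hmean := mean_log_add_log_le T hT (fun t => r (τ.1 t.castSucc) (τ.2 t)) fun t => hr _ _
  simp only [Real.log_div (hpt _ _ _).ne' (hp _ _ _).ne', Finset.sum_sub_distrib,
    Finset.sum_add_distrib]
  linarith
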